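/- Let p ∈ P_n, q ∈ P_m, and let M ∈ C(p,q) be any coupling of p and q. Let m be the vector of the n·m entries of M sorted in non-increasing order, regarded as an element of P_{nm}. Then m ≼ p, m ≼ q, and m ≼ p ∧ q (vectors of unequal lengths being compared after padding the shorter with zeros). -/

import Mathlib

/-!
The first `i` entries of `v` are the entries of `M` at a set `S` of at most `i` positions, and these
positions meet at most `i` rows. By nonnegativity of `M`, their sum is at most the sum of `p` over
those rows, and a sum of at most `i` components of the sorted vector `p` is at most its `i`-th
prefix sum (`sum_le_prefSum`). This gives `v ≼ p`; columns give `v ≼ q` in the same way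
(`maj_of_fibers` treats both). Finally the prefix sums of `p ∧ q` telescope to the minima of the
prefix sums of `p` and `q` (`prefSum_glbVec`), and padding does not change prefix sums, so the third
claim follows from the first two.
-/

open Finset

/-- Sum of the first `i` components (0-indexed) of a vector; for `i ≥ n` this is the total
sum, which implements zero padding. -/
noncomputable def prefSum {n : ℕ} (p : Fin n → ℝ) (i : ℕ) : ℝ :=
  ∑ k : Fin n, if (k : ℕ) < i then p k else 0

/-- Membership in `P_n`: sorted non-increasingly, nonnegative components, summing to 1. -/
def IsProbVec {n : ℕ} (p : Fin n → ℝ) : Prop :=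
  (∀ i j : Fin n, i ≤ j → p j ≤ p i) ∧ (∀ i, 0 ≤ p i) ∧ (∑ i, p i) = 1

/-- Majorization `p ≼ q` (the shorter vector being padded with zeros). -/
def Maj {n m : ℕ} (p : Fin n → ℝ) (q : Fin m → ℝ) : Prop :=
  ∀ i : ℕ, prefSum p i ≤ prefSum q i
/-- The greatest lower bound `p ∧ q` in the majorization lattice `(P_n, ≼)`:
`z₁ = min (p₁, q₁)` and `zᵢ = min (∑_{j≤i} pⱼ, ∑_{j≤i} qⱼ) − ∑_{j<i} zⱼ`, i.e. its prefix
sums are the minima of the corresponding prefix sums of `p` and `q`. -/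
noncomputable def glbVec {n : ℕ} (p q : Fin n → ℝ) : Fin n → ℝ :=
  fun i => min (prefSum p ((i : ℕ) + 1)) (prefSum q ((i : ℕ) + 1)) -
    min (prefSum p (i : ℕ)) (prefSum q (i : ℕ))
/-- `M ∈ C(p,q)`: a coupling of `p` and `q`. -/
def IsCoupling {n m : ℕ} (M : Fin n → Fin m → ℝ) (p : Fin n → ℝ) (q : Fin m → ℝ) : Prop :=
  (∀ i j, 0 ≤ M i j) ∧ (∀ i, (∑ j, M i j) = p i) ∧ (∀ j, (∑ i, M i j) = q j)

/-- Shannon entropy of the vector of entries of a matrix. -/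
noncomputable def H2mat {n m : ℕ} (M : Fin n → Fin m → ℝ) : ℝ :=
  ∑ i, ∑ j, -(M i j * Real.logb 2 (M i j))
/-- Zero padding of a vector to length `N`. -/
def padTo {n : ℕ} (p : Fin n → ℝ) (N : ℕ) : Fin N → ℝ :=
  fun i => if h : (i : ℕ) < n then p ⟨i, h⟩ else 0

lemma prefSum_succ {n : ℕ} (p : Fin n → ℝ) (i : ℕ) :
    prefSum p (i + 1) = prefSum p i + if h : i < n then p ⟨i, h⟩ else 0 := by
  unfold prefSum
  split_ifs with h
  · have h1 : p ⟨i, h⟩ = ∑ k : Fin n, if k = ⟨i, h⟩ then p k else 0 := by simp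
    rw [h1, ← Finset.sum_add_distrib]
    refine Finset.sum_congr rfl fun k _ => ?_
    have h2 : k = ⟨i, h⟩ ↔ (k : ℕ) = i := Fin.ext_iff
    simp only [h2]
    split_ifs <;> first | omega | simp
  · rw [add_zero]
    refine Finset.sum_congr rfl fun k _ => ?_
    have := k.2
    rw [if_pos (by omega), if_pos (by omega)]

lemma prefSum_zero {n : ℕ} (p : Fin n → ℝ) : prefSum p 0 = 0 := by
  simp [prefSum]

lemma prefSum_padTo {n : ℕ} (p : Fin n → ℝ) {N : ℕ} (hN : n ≤ N) (i : ℕ) :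
    prefSum (padTo p N) i = prefSum p i := by
  induction i with
  | zero => simp [prefSum_zero]
  | succ i ih =>
    rw [prefSum_succ, prefSum_succ, ih]
    congr 1
    by_cases h : i < n
    · simp [padTo, h, lt_of_lt_of_le h hN]
    · simp [padTo, h]

lemma prefSum_glbVec {n : ℕ} (p q : Fin n → ℝ) (i : ℕ) :
    prefSum (glbVec p q) i = min (prefSum p i) (prefSum q i) := by
  induction i with
  | zero => simp [prefSum_zero]
  | succ i ih =>
    rw [prefSum_succ, ih]
    by_cases h : i < n
    · simp [glbVec, h]
    · simp [prefSum_succ, h]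

/-- The `i`-th prefix sum of a sorted nonnegative vector dominates the sum over any set of at most
`i` components. -/
lemma sum_le_prefSum {n : ℕ} (p : Fin n → ℝ) (hp : IsProbVec p) (A : Finset (Fin n)) (i : ℕ)
    (hA : #A ≤ i) : ∑ a ∈ A, p a ≤ prefSum p i := by
  obtain ⟨hs, h0, -⟩ := hp
  by_cases hi : i < n
    -- Subtract the threshold `c`: the positive terms `p a - c` all lie among the first `i`.
  · set c := p ⟨i, hi⟩ with hc
    have h1 : ∑ a ∈ A, (p a - c) ≤ ∑ k : Fin n, if (k : ℕ) < i then p k - c else 0 := by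
      calc ∑ a ∈ A, (p a - c) ≤ ∑ a ∈ A, if (a : ℕ) < i then p a - c else 0 := by
            refine Finset.sum_le_sum fun a _ => ?_
            split_ifs with h
            · exact le_rfl
            · exact sub_nonpos.2 (hs _ _ (Fin.le_def.2 (not_lt.1 h)))
        _ ≤ _ := by
            refine Finset.sum_le_sum_of_subset_of_nonneg (Finset.subset_univ A) fun a _ _ => ?_
            split_ifs with h
            · exact sub_nonneg.2 (hs _ _ (Fin.le_def.2 h.le))
            · exact le_rfl
    have h2 : (∑ k : Fin n, if (k : ℕ) < i then p k - c else 0) = prefSum p i - i * c := by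
      have h3 : #{k : Fin n | (k : ℕ) < i} = i := by
        simp [Fin.card_filter_val_lt, hi.le]
      unfold prefSum
      rw [← Finset.sum_filter, ← Finset.sum_filter, Finset.sum_sub_distrib, Finset.sum_const, h3,
        nsmul_eq_mul]
    rw [h2, Finset.sum_sub_distrib, Finset.sum_const, nsmul_eq_mul] at h1
    have h4 : (#A : ℝ) * c ≤ i * c :=
      mul_le_mul_of_nonneg_right (by exact_mod_cast hA) (h0 _)
    linarith
  · have h1 : prefSum p i = ∑ k, p k :=
      Finset.sum_congr rfl fun k _ => if_pos (by have := k.2; omega)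
    rw [h1]
    exact Finset.sum_le_sum_of_subset_of_nonneg (Finset.subset_univ A) fun a _ _ => h0 a

/-- A nonnegative vector is majorized by a sorted vector `p` whose components are its sums over the
fibers of a map `f`; sums over rows and over columns are both of this form. -/
lemma maj_of_fibers {n N : ℕ} (p : Fin n → ℝ) (hp : IsProbVec p) (v : Fin N → ℝ)
    (hv : ∀ k, 0 ≤ v k) (f : Fin N → Fin n) (hf : ∀ a, ∑ k with f k = a, v k = p a) :
    Maj v p := by
  intro i
  set S : Finset (Fin N) := {k | (k : ℕ) < i} with hS
  have hcard : #(S.image f) ≤ i := by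
    refine Finset.card_image_le.trans ?_
    simp [hS, Fin.card_filter_val_lt]
  refine le_trans ?_ (sum_le_prefSum p hp (S.image f) i hcard)
  have h1 : prefSum v i = ∑ k ∈ S, v k := by
    rw [hS, Finset.sum_filter]; rfl
  rw [h1, ← Finset.sum_fiberwise_of_maps_to (fun k hk => Finset.mem_image_of_mem f hk)]
  refine Finset.sum_le_sum fun a _ => ?_
  rw [← hf a]
  exact Finset.sum_le_sum_of_subset_of_nonneg
    (Finset.filter_subset_filter _ (Finset.subset_univ S)) fun k _ _ => hv k

/-- if `M ∈ C(p,q)` is a coupling of `p ∈ P_n` and `q ∈ P_m`, and `v ∈ P_{nm}`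
is the vector of the `n·m` entries of `M` sorted non-increasingly, then `v ≼ p`, `v ≼ q` and
`v ≼ p ∧ q` (unequal lengths compared after zero padding). -/
theorem coupling_entries_majorized {n m : ℕ} (p : Fin n → ℝ) (q : Fin m → ℝ)
    (hp : IsProbVec p) (hq : IsProbVec q)
    (M : Fin n → Fin m → ℝ) (hM : IsCoupling M p q)
    (v : Fin (n * m) → ℝ) (e : Fin n × Fin m ≃ Fin (n * m))
    (hv : ∀ i j, v (e (i, j)) = M i j)
    (hsorted : ∀ a b : Fin (n * m), a ≤ b → v b ≤ v a) :
    Maj v p ∧ Maj v q ∧ Maj v (glbVec (padTo p (max n m)) (padTo q (max n m))) := by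
  obtain ⟨hM0, hMp, hMq⟩ := hM
  have hv0 : ∀ k, 0 ≤ v k := fun k => by
    have := hM0 (e.symm k).1 (e.symm k).2
    rw [← hv] at this
    simpa using this
  have h1 : Maj v p := by
    refine maj_of_fibers p hp v hv0 (fun k => (e.symm k).1) fun a => ?_
    rw [Finset.sum_filter, ← e.sum_comp, Fintype.sum_prod_type, Finset.sum_comm, ← hMp a]
    simp [hv]
  have h2 : Maj v q := by
    refine maj_of_fibers q hq v hv0 (fun k => (e.symm k).2) fun b => ?_
    rw [Finset.sum_filter, ← e.sum_comp, Fintype.sum_prod_type, ← hMq b]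
    simp [hv]
  refine ⟨h1, h2, fun i => ?_⟩
  rw [prefSum_glbVec, prefSum_padTo p (le_max_left n m), prefSum_padTo q (le_max_right n m)]
  exact le_min (h1 i) (h2 i)
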